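/- For integers 0 ≤ r ≤ m, the trelliswidth of the binary Reed–Muller code RM(r,m) is τ(r,m) = Σ_{j=0}^{r} C(m−2j−1, r−j) if m ≥ 2r+1, and τ(r,m) = 1 + Σ_{j=0}^{m−r−1} C(m−2j−1, r−j) if m < 2r+1 (here C(a,b) denotes the binomial coefficient, equal to 0 when b > a). -/

import Mathlib

open Module

/-- The submodule of vectors supported on `J` (i.e. zero outside `J`). -/
def supportedOn (F : Type) [Field F] {n : ℕ} (J : Set (Fin n)) : Submodule F (Fin n → F) :=
  Submodule.pi Jᶜ fun _ => ⊥

/-- Dimension of the shortening `C_J` of the code `C` to the coordinates in `J`. -/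
noncomputable def shortDim {F : Type} [Field F] {n : ℕ}
    (C : Submodule F (Fin n → F)) (J : Set (Fin n)) : ℕ :=
  finrank F ↥(C ⊓ supportedOn F J)

/-- Trelliswidth: the least branch complexity of any trellis realization of `C`,
minimized over all orderings (bijections from positions to coordinates) of `C`. -/
noncomputable def trellisWidth {F : Type} [Field F] {n : ℕ}
    (C : Submodule F (Fin n → F)) : ℕ :=
  sInf {t : ℕ | ∃ π : Equiv.Perm (Fin n),
    t = Finset.univ.sup fun i : Fin n =>
      finrank F ↥C - shortDim C (⇑π '' {j | j < i}) - shortDim C (⇑π '' {j | i < j})}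

/-- The binary Reed–Muller code `RM(r,m)`: the evaluation vectors, at the points of
`{0,1}^m` listed in the standard bit order, of the `m`-variable polynomials over `F₂`
of total degree at most `r`. -/
def RMcode (r m : ℕ) : Submodule (ZMod 2) (Fin (2 ^ m) → ZMod 2) :=
  Submodule.span (ZMod 2)
    {w | ∃ f : MvPolynomial (Fin m) (ZMod 2), f.totalDegree ≤ r ∧
      w = fun i => MvPolynomial.eval (fun j : Fin m => if Nat.testBit i.val j.val then 1 else 0) f}

/-- The claimed value `τ(r,m)` of the trelliswidth of `RM(r,m)`. -/
def tauRM (r m : ℕ) : ℕ :=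
  if 2 * r + 1 ≤ m then ∑ j ∈ Finset.range (r + 1), Nat.choose (m - (2 * j + 1)) (r - j)
  else 1 + ∑ j ∈ Finset.range (m - r), Nat.choose (m - (2 * j + 1)) (r - j)

/-- Hamming weight of the binary expansion. -/
def pcnt (n : ℕ) : ℕ := if h : n = 0 then 0 else n % 2 + pcnt (n / 2)
termination_by n
decreasing_by omega

theorem pcnt_zero : pcnt 0 = 0 := by rw [pcnt]; simp

theorem pcnt_two_mul (n : ℕ) : pcnt (2 * n) = pcnt n := by
  by_cases h : n = 0
  · subst h; rfl
  · rw [pcnt, dif_neg (by omega)]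
    have h1 : 2 * n % 2 = 0 := by omega
    have h2 : 2 * n / 2 = n := by omega
    rw [h1, h2, zero_add]

theorem pcnt_two_mul_add_one (n : ℕ) : pcnt (2 * n + 1) = pcnt n + 1 := by
  rw [pcnt, dif_neg (by omega)]
  have h1 : (2 * n + 1) % 2 = 1 := by omega
  have h2 : (2 * n + 1) / 2 = n := by omega
  rw [h1, h2, add_comm]

theorem pcnt_top (k : ℕ) : ∀ y, y < 2 ^ k → pcnt (2 ^ k + y) = pcnt y + 1 := by
  induction k with
  | zero =>
    intro y hy
    have : y = 0 := by simpa using hy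
    subst this
    have := pcnt_two_mul_add_one 0
    simpa using this
  | succ k ih =>
    intro y hy
    have hp : 2 ^ (k + 1) = 2 * 2 ^ k := by ring
    obtain ⟨z, hz | hz⟩ := Nat.even_or_odd' y
    · have : 2 ^ (k + 1) + y = 2 * (2 ^ k + z) := by rw [hz]; ring
      rw [this, hz, pcnt_two_mul, pcnt_two_mul, ih z (by omega)]
    · have : 2 ^ (k + 1) + y = 2 * (2 ^ k + z) + 1 := by rw [hz]; ring
      rw [this, hz, pcnt_two_mul_add_one, pcnt_two_mul_add_one, ih z (by omega)]

theorem pcnt_compl (m : ℕ) : ∀ i j, i + j + 1 = 2 ^ m → pcnt i + pcnt j = m := by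
  induction m with
  | zero =>
    intro i j h
    have h1 : i = 0 := by simp at h; omega
    have h2 : j = 0 := by simp at h; omega
    subst h1; subst h2; simp [pcnt_zero]
  | succ m ih =>
    intro i j h
    have hp : 2 ^ (m + 1) = 2 * 2 ^ m := by ring
    obtain ⟨a, ha | ha⟩ := Nat.even_or_odd' i
    · obtain ⟨b, hb | hb⟩ := Nat.even_or_odd' j
      · omega
      · rw [ha, hb, pcnt_two_mul, pcnt_two_mul_add_one]
        have := ih a b (by omega)
        omega
    · obtain ⟨b, hb | hb⟩ := Nat.even_or_odd' j
      · rw [ha, hb, pcnt_two_mul, pcnt_two_mul_add_one]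
        have := ih a b (by omega)
        omega
      · omega

/-- Number of integers below `s` of binary weight less than `q`. -/
def cntW (q s : ℕ) : ℕ := ∑ x ∈ Finset.range s, if pcnt x < q then 1 else 0

theorem cntW_succ (q s : ℕ) : cntW q (s + 1) = cntW q s + if pcnt s < q then 1 else 0 := by
  rw [cntW, Finset.sum_range_succ, cntW]

theorem cntW_zero (q : ℕ) : cntW q 0 = 0 := by simp [cntW]

theorem cntW_zero_left (s : ℕ) : cntW 0 s = 0 := by simp [cntW]

theorem cntW_mono (s : ℕ) {p q : ℕ} (h : p ≤ q) : cntW p s ≤ cntW q s := by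
  apply Finset.sum_le_sum
  intro x _
  split_ifs <;> omega

theorem cntW_even (q t : ℕ) : cntW q (2 * t) = cntW q t + cntW (q - 1) t := by
  induction t with
  | zero => simp [cntW_zero]
  | succ t ih =>
    have : 2 * (t + 1) = 2 * t + 1 + 1 := by ring
    rw [this, cntW_succ, cntW_succ, cntW_succ, cntW_succ, ih, pcnt_two_mul, pcnt_two_mul_add_one]
    have : pcnt t + 1 < q ↔ pcnt t < q - 1 := by omega
    simp only [this]
    ring

theorem cntW_odd (q t : ℕ) : cntW q (2 * t + 1) = cntW q (t + 1) + cntW (q - 1) t := by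
  rw [cntW_succ, cntW_even, cntW_succ, pcnt_two_mul]; ring

/-- The key subadditivity inequality. -/
theorem cntW_add_le (N : ℕ) : ∀ q a b, a + b ≤ N → b ≤ a →
    cntW q (a + b) ≤ cntW q a + cntW (q - 1) b := by
  induction N with
  | zero =>
    intro q a b h _
    have h1 : a = 0 := by omega
    have h2 : b = 0 := by omega
    subst h1; subst h2; simp [cntW_zero]
  | succ N ih =>
    intro q a b h hab
    by_cases hb : b = 0
    · subst hb; simp [cntW_zero]
    by_cases hab' : a = b
    · subst hab'
      rw [← two_mul, cntW_even]
    obtain ⟨c, hc | hc⟩ := Nat.even_or_odd' a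
    · obtain ⟨d, hd | hd⟩ := Nat.even_or_odd' b
      · have e : a + b = 2 * (c + d) := by omega
        rw [e, hc, hd, cntW_even, cntW_even, cntW_even]
        have h1 := ih q c d (by omega) (by omega)
        have h2 := ih (q - 1) c d (by omega) (by omega)
        omega
      · have e : a + b = 2 * (c + d) + 1 := by omega
        rw [e, hc, hd, cntW_even, cntW_odd, cntW_odd]
        have h1 := ih q c (d + 1) (by omega) (by omega)
        have h2 := ih (q - 1) c d (by omega) (by omega)
        rw [← add_assoc] at h1
        omega
    · obtain ⟨d, hd | hd⟩ := Nat.even_or_odd' b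
      · have e : a + b = 2 * (c + d) + 1 := by omega
        rw [e, hc, hd, cntW_even, cntW_odd, cntW_odd]
        have h1 := ih q (c + 1) d (by omega) (by omega)
        have h2 := ih (q - 1) c d (by omega) (by omega)
        rw [add_right_comm] at h1
        omega
      · have e : a + b = 2 * (c + d + 1) := by omega
        rw [e, hc, hd, cntW_even, cntW_odd, cntW_odd]
        have h1 := ih q (c + 1) d (by omega) (by omega)
        have h2 := ih (q - 1) c (d + 1) (by omega) (by omega)
        rw [add_right_comm] at h1
        rw [← add_assoc] at h2
        have h3 := cntW_succ (q - 1) d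
        have h4 := cntW_succ (q - 1 - 1) d
        split_ifs at h3 h4 <;> omega

theorem cntW_top (q k s : ℕ) (hs : s ≤ 2 ^ k) :
    cntW q (2 ^ k + s) = cntW q (2 ^ k) + cntW (q - 1) s := by
  induction s with
  | zero => simp [cntW_zero]
  | succ s ih =>
    rw [← add_assoc, cntW_succ, ih (by omega), cntW_succ, pcnt_top k s (by omega)]
    have : pcnt s + 1 < q ↔ pcnt s < q - 1 := by omega
    simp only [this]
    ring

theorem cntW_dual (m p q : ℕ) (hpq : p + q = m + 1) (i j : ℕ) (h : j + i = 2 ^ m) :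
    cntW p j + i = cntW p (2 ^ m) + cntW q i := by
  induction i generalizing j with
  | zero => simp at h; subst h; simp [cntW_zero]
  | succ i ih =>
    have h1 := ih (j + 1) (by omega)
    rw [cntW_succ] at h1
    rw [cntW_succ]
    have h2 := pcnt_compl m i j (by omega)
    split_ifs at h1 ⊢ <;> omega

theorem cntW_pow_add (m p q : ℕ) (hpq : p + q = m + 1) :
    cntW p (2 ^ m) + cntW q (2 ^ m) = 2 ^ m := by
  have := cntW_dual m p q hpq (2 ^ m) 0 (by omega)
  rw [cntW_zero] at this
  omega

theorem cntW_pow_succ (p m : ℕ) : cntW (p + 1) (2 ^ m) = cntW p (2 ^ m) + m.choose p := by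
  induction m generalizing p with
  | zero =>
    have h0 : ∀ q, cntW q (2 ^ 0) = if 0 < q then 1 else 0 := by
      intro q
      have := cntW_succ q 0
      rw [pcnt_zero, cntW_zero] at this
      simpa using this
    rw [h0, h0]
    cases p <;> simp
  | succ m ih =>
    have hp : 2 ^ (m + 1) = 2 * 2 ^ m := by ring
    rw [hp, cntW_even, cntW_even]
    cases p with
    | zero =>
      have := ih 0
      simp [cntW_zero_left] at this ⊢
      exact this
    | succ p =>
      have h1 := ih p
      have h2 := ih (p + 1)
      rw [Nat.choose_succ_succ']
      simp only [Nat.add_sub_cancel]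
      omega

theorem cntW_layer_aux (p i d : ℕ) :
    cntW (p + 1) i + cntW p (i + d) ≤ cntW (p + 1) (i + d) + cntW p i := by
  induction d with
  | zero => simp
  | succ d ih =>
    rw [← add_assoc, cntW_succ, cntW_succ]
    split_ifs <;> omega

/-- The layer of weight exactly `p` below `i ≤ 2^m` has at most `C(m,p)` elements. -/
theorem cntW_layer (p m i : ℕ) (hi : i ≤ 2 ^ m) : cntW (p + 1) i ≤ cntW p i + m.choose p := by
  have h := cntW_pow_succ p m
  have h2 := cntW_layer_aux p i (2 ^ m - i)
  rw [Nat.add_sub_cancel' hi] at h2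
  omega

theorem tauRM_self (m : ℕ) : tauRM m m = 1 := by
  rw [tauRM, if_neg (by omega)]; simp

theorem tauRM_zero (m : ℕ) : tauRM 0 m = 1 := by
  rw [tauRM]
  by_cases h : 1 ≤ m
  · rw [if_pos (by omega)]; simp
  · have : m = 0 := by omega
    subst this; simp

theorem tauRM_rec (r k : ℕ) (h : r ≤ k) :
    tauRM (r + 1) (k + 2) = (k + 1).choose (r + 1) + tauRM r k := by
  rw [tauRM, tauRM]
  by_cases hc : 2 * r + 1 ≤ k
  · rw [if_pos (by omega), if_pos hc, Finset.sum_range_succ', add_comm]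
    congr 1
    apply Finset.sum_congr rfl
    intro j _
    congr 1 <;> omega
  · rw [if_neg (by omega), if_neg hc]
    have : k + 2 - (r + 1) = (k - r) + 1 := by omega
    rw [this, Finset.sum_range_succ', add_left_comm]
    rw [add_comm]
    have e : ∑ j ∈ Finset.range (k - r), (k + 2 - (2 * (j + 1) + 1)).choose (r + 1 - (j + 1))
      = ∑ j ∈ Finset.range (k - r), (k - (2 * j + 1)).choose (r - j) := by
      apply Finset.sum_congr rfl
      intro j _
      congr 1 <;> omega
    rw [e]
    simp only [Nat.mul_zero, Nat.sub_zero, zero_add]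
    have : k + 2 - 1 = k + 1 := by omega
    rw [this]
    omega

/-- Prefix `01`. -/
theorem G_01 (r k i : ℕ) (hr : r ≤ k) (hi : i < 2 ^ k) :
    cntW (r + 2) (2 ^ k + i + 1) + cntW (k - r + 1) (2 ^ k + i)
      = cntW (r + 1) (i + 1) + cntW (k - r) i + (k + 1).choose (r + 1) + 2 ^ k := by
  rw [add_assoc, cntW_top _ _ _ (by omega), cntW_top _ _ _ (by omega)]
  have h1 := cntW_pow_succ (r + 1) k
  have h2 := cntW_pow_succ r k
  have h3 := cntW_pow_add k r (k - r + 1) (by omega)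
  have h4 := Nat.choose_succ_succ' k r
  simp only [Nat.add_sub_cancel, show r + 2 - 1 = r + 1 from rfl, show r + 1 + 1 = r + 2 from rfl]
    at *
  omega

/-- Prefix `1`. -/
theorem G_1 (r k i : ℕ) (hr : r ≤ k) (hi : i < 2 ^ (k + 1)) :
    cntW (r + 2) (2 ^ (k + 1) + i + 1) + cntW (k - r + 1) (2 ^ (k + 1) + i)
      = cntW (r + 1) (i + 1) + cntW (k - r) i + (k + 1).choose (r + 1) + 2 ^ (k + 1) := by
  rw [add_assoc, cntW_top _ _ _ (by omega), cntW_top _ _ _ (by omega)]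
  have h1 := cntW_pow_succ (r + 1) (k + 1)
  have h3 := cntW_pow_add (k + 1) (r + 1) (k - r + 1) (by omega)
  simp only [Nat.add_sub_cancel, show r + 2 - 1 = r + 1 from rfl, show r + 1 + 1 = r + 2 from rfl]
    at *
  omega

/-- Prefix `11`, second step. -/
theorem G_11 (r k i : ℕ) (hr : r ≤ k) (hi : i < 2 ^ k) :
    cntW (r + 1) (2 ^ k + i + 1) + cntW (k - r) (2 ^ k + i)
      ≤ cntW (r + 1) (i + 1) + cntW (k - r) i + 2 ^ k := by
  rw [add_assoc, cntW_top _ _ _ (by omega), cntW_top _ _ _ (by omega)]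
  have h3 := cntW_pow_add k (r + 1) (k - r) (by omega)
  have h4 := cntW_mono (i + 1) (show r + 1 - 1 ≤ r + 1 by omega)
  have h5 := cntW_mono i (show k - r - 1 ≤ k - r by omega)
  omega

/-- Prefix `00`. -/
theorem G_00 (r k i : ℕ) (hr : r ≤ k) (hi : i < 2 ^ k) :
    cntW (r + 2) (i + 1) + cntW (k - r + 1) i
      ≤ cntW (r + 1) (i + 1) + cntW (k - r) i + (k + 1).choose (r + 1) := by
  have h1 := cntW_layer (r + 1) k (i + 1) (by omega)
  have h2 := cntW_layer (k - r) k i (by omega)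
  rw [Nat.choose_symm hr] at h2
  have h4 := Nat.choose_succ_succ' k r
  simp only [show r + 1 + 1 = r + 2 from rfl] at *
  omega

theorem cntW_full (m i : ℕ) (hi : i ≤ 2 ^ m) : cntW (m + 1) i = i := by
  have h := cntW_dual m (m + 1) 0 (by omega) (2 ^ m - i) i (by omega)
  have h2 := cntW_pow_add m (m + 1) 0 (by omega)
  rw [cntW_zero_left] at h h2
  omega

theorem G_self (m i : ℕ) (hi : i < 2 ^ m) :
    cntW (m + 1) (i + 1) + cntW (m - m) i = 1 + i := by
  rw [cntW_full m _ (by omega), Nat.sub_self, cntW_zero_left]; omega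

theorem cntW_one (i : ℕ) : cntW 1 (i + 1) = 1 := by
  induction i with
  | zero => rw [cntW_succ, cntW_zero, pcnt_zero]; simp
  | succ i ih =>
    rw [cntW_succ, ih]
    have := cntW_mono (i + 2) (show 1 ≤ 1 by omega)
    have hp : ∀ n, 0 < n → 0 < pcnt n := by
      intro n
      induction n using Nat.strong_induction_on with
      | _ n ih =>
        intro hn
        rw [pcnt, dif_neg (by omega)]
        by_cases h : n % 2 = 1
        · omega
        · have := ih (n / 2) (by omega) (by omega)
          omega
    have := hp (i + 1) (by omega)
    rw [if_neg (by omega)]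

theorem G_zero (m i : ℕ) (hi : i < 2 ^ m) :
    cntW (0 + 1) (i + 1) + cntW (m - 0) i = 1 + i := by
  rw [zero_add, cntW_one, Nat.sub_zero]
  have h := cntW_dual m 1 m (by omega) i (2 ^ m - i) (by omega)
  have h1 := cntW_one (2 ^ m - i - 1)
  have h2 := cntW_one (2 ^ m - 1)
  rw [Nat.sub_add_cancel (by omega)] at h1
  rw [Nat.sub_add_cancel (by omega)] at h2
  omega

theorem G_max (m : ℕ) : ∀ r, r ≤ m →
    (∀ i, i < 2 ^ m → cntW (r + 1) (i + 1) + cntW (m - r) i ≤ tauRM r m + i) ∧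
    (∃ i, i < 2 ^ m ∧ cntW (r + 1) (i + 1) + cntW (m - r) i = tauRM r m + i) := by
  induction m using Nat.strong_induction_on with
  | _ m ih =>
    intro r hr
    by_cases h1 : r = m
    · subst h1
      rw [tauRM_self]
      exact ⟨fun i hi => (G_self r i hi).le, 0, by positivity, G_self r 0 (by positivity)⟩
    by_cases h0 : r = 0
    · subst h0
      rw [tauRM_zero]
      exact ⟨fun i hi => (G_zero m i hi).le, 0, by positivity, G_zero m 0 (by positivity)⟩
    obtain ⟨r, rfl⟩ : ∃ r', r = r' + 1 := ⟨r - 1, by omega⟩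
    obtain ⟨k, rfl⟩ : ∃ k, m = k + 2 := ⟨m - 2, by omega⟩
    have hrk : r ≤ k := by omega
    obtain ⟨hA, i₀, hi₀, hB⟩ := ih k (by omega) r hrk
    rw [tauRM_rec r k hrk]
    have hsub : k + 2 - (r + 1) = k - r + 1 := by omega
    rw [hsub]
    have hp1 : 2 ^ (k + 1) = 2 * 2 ^ k := by ring
    have hp2 : 2 ^ (k + 2) = 4 * 2 ^ k := by ring
    constructor
    · intro i hi
      by_cases c1 : i < 2 ^ k
      · have := G_00 r k i hrk c1
        have := hA i c1
        simp only [show r + 1 + 1 = r + 2 from rfl] at *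
        omega
      by_cases c2 : i < 2 ^ (k + 1)
      · obtain ⟨j, rfl⟩ : ∃ j, i = 2 ^ k + j := ⟨i - 2 ^ k, by omega⟩
        have := G_01 r k j hrk (by omega)
        have := hA j (by omega)
        simp only [show r + 1 + 1 = r + 2 from rfl] at *
        omega
      obtain ⟨j, rfl⟩ : ∃ j, i = 2 ^ (k + 1) + j := ⟨i - 2 ^ (k + 1), by omega⟩
      have e := G_1 r k j hrk (by omega)
      simp only [show r + 1 + 1 = r + 2 from rfl] at *
      by_cases c3 : j < 2 ^ k
      · have := hA j c3
        omega
      · obtain ⟨l, rfl⟩ : ∃ l, j = 2 ^ k + l := ⟨j - 2 ^ k, by omega⟩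
        have := G_11 r k l hrk (by omega)
        have := hA l (by omega)
        omega
    · refine ⟨2 ^ k + i₀, by omega, ?_⟩
      have := G_01 r k i₀ hrk hi₀
      simp only [show r + 1 + 1 = r + 2 from rfl] at *
      omega

/-- The monomial function indexed by `T`: `n ↦ 1` iff the bits of `T` are bits of `n`. -/
noncomputable def chi (T : ℕ) : ℕ → ZMod 2 := by
  classical
  exact fun n => if ∀ j, T.testBit j = true → n.testBit j = true then 1 else 0

theorem chi_apply (T n : ℕ) [Decidable (∀ j, T.testBit j = true → n.testBit j = true)] :
    chi T n = if ∀ j, T.testBit j = true → n.testBit j = true then 1 else 0 := by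
  unfold chi
  congr

/-- The `j`-th bit as a function to `ZMod 2`. -/
def bitF (j : ℕ) : ℕ → ZMod 2 := fun n => if n.testBit j then 1 else 0

/-- Functions on `ℕ` of Reed–Muller degree less than `q`. -/
noncomputable def VV (q : ℕ) : Submodule (ZMod 2) (ℕ → ZMod 2) :=
  Submodule.span (ZMod 2) {f | ∃ T, pcnt T < q ∧ f = chi T}

theorem chi_mem {T q : ℕ} (h : pcnt T < q) : chi T ∈ VV q :=
  Submodule.subset_span ⟨T, h, rfl⟩

theorem VV_mono {p q : ℕ} (h : p ≤ q) : VV p ≤ VV q := by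
  apply Submodule.span_mono
  rintro f ⟨T, hT, rfl⟩
  exact ⟨T, by omega, rfl⟩

theorem chi_zero : chi 0 = 1 := by
  classical
  funext n
  simp [chi_apply]

theorem chi_eq_zero {T n : ℕ} (h : n < T) : chi T n = 0 := by
  classical
  rw [chi_apply, if_neg]
  intro hh
  have : T ≤ n := Nat.le_of_testBit hh
  omega

theorem bitF_mul_chi (j T : ℕ) : bitF j * chi T = chi (T ||| 2 ^ j) := by
  classical
  funext n
  simp only [Pi.mul_apply, bitF, chi_apply, Nat.testBit_or, Nat.testBit_two_pow]
  rw [ite_mul, one_mul, zero_mul, ← ite_and]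
  congr 1
  apply propext
  constructor
  · rintro ⟨h1, h2⟩ l hl
    simp at hl
    rcases hl with hl | rfl
    · exact h2 l hl
    · exact h1
  · intro h
    exact ⟨h j (by simp), fun l hl => h l (by simp [hl])⟩

theorem pcnt_or (j : ℕ) : ∀ T, pcnt (T ||| 2 ^ j) ≤ pcnt T + 1 := by
  induction j with
  | zero =>
    intro T
    obtain ⟨t, ht | ht⟩ := Nat.even_or_odd' T
    · have : T ||| 2 ^ 0 = 2 * t + 1 := by
        apply Nat.eq_of_testBit_eq
        intro i
        have e' : (2 * t + 1) / 2 = t := by omega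
        cases i <;> simp [Nat.testBit_succ, ht, Nat.or_div_two, e']
      rw [this, ht, pcnt_two_mul_add_one, pcnt_two_mul]
    · have : T ||| 2 ^ 0 = 2 * t + 1 := by
        apply Nat.eq_of_testBit_eq
        intro i
        cases i <;> simp [Nat.testBit_succ, ht, Nat.or_div_two] <;> omega
      rw [this, ht]; omega
  | succ j ih =>
    intro T
    obtain ⟨t, ht | ht⟩ := Nat.even_or_odd' T
    · have : T ||| 2 ^ (j + 1) = 2 * (t ||| 2 ^ j) := by
        apply Nat.eq_of_testBit_eq
        intro i
        cases i <;> simp [Nat.testBit_succ, ht, Nat.or_div_two, pow_succ]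
      rw [this, ht, pcnt_two_mul, pcnt_two_mul]
      exact ih t
    · have : T ||| 2 ^ (j + 1) = 2 * (t ||| 2 ^ j) + 1 := by
        apply Nat.eq_of_testBit_eq
        intro i
        have e : (2 * t + 1) / 2 = t := by omega
        have e' : (2 * (t ||| 2 ^ j) + 1) / 2 = t ||| 2 ^ j := by omega
        cases i <;> simp [Nat.testBit_succ, ht, Nat.or_div_two, pow_succ, e, e']
      rw [this, ht, pcnt_two_mul_add_one, pcnt_two_mul_add_one]
      have := ih t
      omega

theorem bitF_mul_mem (j q : ℕ) {f : ℕ → ZMod 2} (hf : f ∈ VV q) : bitF j * f ∈ VV (q + 1) := by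
  have : VV q ≤ (VV (q + 1)).comap (LinearMap.mulLeft (ZMod 2) (bitF j)) := by
    apply Submodule.span_le.2
    rintro f ⟨T, hT, rfl⟩
    simp only [Submodule.comap_coe, Set.mem_preimage, LinearMap.mulLeft_apply, SetLike.mem_coe]
    rw [bitF_mul_chi]
    apply chi_mem
    have := pcnt_or j T
    omega
  exact this hf

theorem half_mem (q : ℕ) {f : ℕ → ZMod 2} (hf : f ∈ VV q) : (fun n => f (n / 2)) ∈ VV q := by
  have : VV q ≤ (VV q).comap (LinearMap.funLeft (ZMod 2) (ZMod 2) (fun n : ℕ => n / 2)) := by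
    apply Submodule.span_le.2
    rintro f ⟨T, hT, rfl⟩
    simp only [Submodule.comap_coe, Set.mem_preimage, SetLike.mem_coe]
    have : (LinearMap.funLeft (ZMod 2) (ZMod 2) fun n : ℕ => n / 2) (chi T) = chi (2 * T) := by
      classical
      funext n
      simp only [LinearMap.funLeft_apply, chi_apply]
      congr 1
      apply propext
      constructor
      · intro h l hl
        cases l with
        | zero => simp at hl
        | succ l =>
          rw [Nat.testBit_succ] at hl ⊢
          apply h
          simpa using hl
      · intro h l hl
        have := h (l + 1)
        rw [Nat.testBit_succ, Nat.testBit_succ] at this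
        apply this
        simpa using hl
    rw [this]
    exact chi_mem (by rwa [pcnt_two_mul])
  exact this hf

/-- Rank-nullity for a submodule. -/
theorem finrank_map_add {K A B : Type*} [Field K] [AddCommGroup A] [Module K A] [AddCommGroup B]
    [Module K B] (W : Submodule K A) [FiniteDimensional K W] (f : A →ₗ[K] B) :
    finrank K (W.map f) + finrank K ↥(W ⊓ LinearMap.ker f) = finrank K W := by
  have h := (f.domRestrict W).finrank_range_add_finrank_ker
  rw [LinearMap.range_domRestrict, LinearMap.ker_domRestrict] at h
  rw [← h]
  congr 1
  rw [← Submodule.map_comap_subtype]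
  exact (Submodule.equivSubtypeMap W _).finrank_eq.symm

theorem VV_zero_restrict_lower {κ : Type} [Fintype κ] (q : ℕ) (φ : κ → ℕ)
    (hφ : Function.Injective φ) (h0 : ∀ x, φ x < 1) :
    cntW q (Fintype.card κ) ≤
      finrank (ZMod 2) ((VV q).map (LinearMap.funLeft (ZMod 2) (ZMod 2) φ)) := by
  have hs : Subsingleton κ := ⟨fun x y => hφ (by have := h0 x; have := h0 y; omega)⟩
  rcases isEmpty_or_nonempty κ with he | hne
  · simp [cntW_zero]
  · have : Fintype.card κ = 0 + 1 := by
      have := Fintype.card_le_one_iff_subsingleton.2 hs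
      have := Fintype.card_pos (α := κ)
      omega
    rw [this, cntW_succ, cntW_zero, pcnt_zero]
    split_ifs with hq
    · rw [zero_add, Submodule.one_le_finrank_iff]
      intro hb
      have hm : LinearMap.funLeft (ZMod 2) (ZMod 2) φ (chi 0) ∈
          (VV q).map (LinearMap.funLeft (ZMod 2) (ZMod 2) φ) :=
        Submodule.mem_map_of_mem (chi_mem (by rwa [pcnt_zero]))
      rw [hb, Submodule.mem_bot, chi_zero] at hm
      have := congrFun hm hne.some
      simp at this
    · simp

theorem VV_restrict_lower (B : ℕ) : ∀ (κ : Type) [Fintype κ] (q : ℕ) (φ : κ → ℕ),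
    Function.Injective φ → (∀ x, φ x < 2 ^ B) →
    cntW q (Fintype.card κ) ≤
      finrank (ZMod 2) ((VV q).map (LinearMap.funLeft (ZMod 2) (ZMod 2) φ)) := by
  induction B with
  | zero =>
    intro κ _ q φ hφ h
    exact VV_zero_restrict_lower q φ hφ (by simpa using h)
  | succ B ih =>
    intro κ _ q φ hφ hB
    classical
    -- general step: choose which half is the large one
    have key : ∀ e : ℕ, e < 2 →
        cntW q (Fintype.card {x // φ x % 2 = e}) +
        cntW (q - 1) (Fintype.card {x // ¬ φ x % 2 = e}) ≤
        finrank (ZMod 2) ((VV q).map (LinearMap.funLeft (ZMod 2) (ZMod 2) φ)) := by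
      intro e he
      set W := (VV q).map (LinearMap.funLeft (ZMod 2) (ZMod 2) φ) with hW
      set ρ := LinearMap.funLeft (ZMod 2) (ZMod 2) (Subtype.val : {x // φ x % 2 = e} → κ) with hρ
      set ρ' := LinearMap.funLeft (ZMod 2) (ZMod 2) (Subtype.val : {x // ¬ φ x % 2 = e} → κ)
        with hρ'
      rw [← finrank_map_add W ρ]
      apply add_le_add
      · refine (ih {x // φ x % 2 = e} q (fun x => φ x / 2) ?_ ?_).trans ?_
        · rintro ⟨x, hx⟩ ⟨y, hy⟩ hxy
          apply Subtype.ext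
          apply hφ
          simp only at hxy ⊢
          omega
        · rintro ⟨x, hx⟩
          have := hB x
          rw [pow_succ] at this
          simp only
          omega
        · apply Submodule.finrank_mono
          rintro _ ⟨f, hf, rfl⟩
          exact ⟨_, ⟨_, half_mem q hf, rfl⟩, rfl⟩
      · rcases q with _ | q
        · rw [cntW_zero_left]; omega
        simp only [Nat.add_sub_cancel]
        refine (ih {x // ¬ φ x % 2 = e} q (fun x => φ x / 2) ?_ ?_).trans ?_
        · rintro ⟨x, hx⟩ ⟨y, hy⟩ hxy
          apply Subtype.ext
          apply hφ
          simp only at hxy ⊢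
          omega
        · rintro ⟨x, hx⟩
          have := hB x
          rw [pow_succ] at this
          simp only
          omega
        · refine le_trans ?_ (Submodule.finrank_map_le ρ' _)
          apply Submodule.finrank_mono
          rintro _ ⟨f, hf, rfl⟩
          set g : ℕ → ZMod 2 := bitF 0 * (fun n => f (n / 2)) + (e : ZMod 2) • (fun n => f (n / 2))
            with hg
          have hgm : g ∈ VV (q + 1) := by
            apply Submodule.add_mem
            · exact bitF_mul_mem 0 q (half_mem q hf)
            · exact Submodule.smul_mem _ _ (VV_mono (Nat.le_succ q) (half_mem q hf))
          refine ⟨LinearMap.funLeft (ZMod 2) (ZMod 2) φ g, ⟨⟨g, hgm, rfl⟩, ?_⟩, ?_⟩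
          · rw [SetLike.mem_coe, LinearMap.mem_ker]
            funext x
            obtain ⟨x, hx⟩ := x
            simp only [hρ, LinearMap.funLeft_apply, hg, Pi.add_apply, Pi.mul_apply, Pi.smul_apply,
              bitF, Pi.zero_apply, Nat.testBit_zero, smul_eq_mul]
            interval_cases e
            · simp [hx]
            · simp [hx, CharTwo.add_self_eq_zero]
          · funext x
            obtain ⟨x, hx⟩ := x
            simp only [hρ', LinearMap.funLeft_apply, hg, Pi.add_apply, Pi.mul_apply, Pi.smul_apply,
              bitF, Nat.testBit_zero, smul_eq_mul]
            interval_cases e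
            · have : φ x % 2 = 1 := by omega
              simp [this]
            · have : φ x % 2 = 0 := by omega
              simp [this]
    have hcard : Fintype.card {x // φ x % 2 = 0} + Fintype.card {x // ¬ φ x % 2 = 0}
        = Fintype.card κ := by
      rw [Fintype.card_subtype_compl]
      have := Fintype.card_subtype_le (fun x => φ x % 2 = 0)
      omega
    have h1 : Fintype.card {x // ¬ φ x % 2 = 0} = Fintype.card {x // φ x % 2 = 1} :=
      Fintype.card_congr (Equiv.subtypeEquivRight fun x => by omega)
    have h2 : Fintype.card {x // ¬ φ x % 2 = 1} = Fintype.card {x // φ x % 2 = 0} :=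
      Fintype.card_congr (Equiv.subtypeEquivRight fun x => by omega)
    by_cases hle : Fintype.card {x // ¬ φ x % 2 = 0} ≤ Fintype.card {x // φ x % 2 = 0}
    · have k0 := key 0 (by omega)
      have := cntW_add_le _ q _ _ le_rfl hle
      rw [hcard] at this
      omega
    · have k1 := key 1 (by omega)
      rw [h2, ← h1] at k1
      have := cntW_add_le _ q _ _ le_rfl (not_le.1 hle).le
      rw [add_comm, hcard] at this
      omega

/-- Restricting to points below `s`. -/
theorem VV_restrict_upper {κ : Type} [Finite κ] (q s : ℕ) (φ : κ → ℕ) (h : ∀ x, φ x < s) :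
    finrank (ZMod 2) ((VV q).map (LinearMap.funLeft (ZMod 2) (ZMod 2) φ)) ≤ cntW q s := by
  classical
  set A : Finset (κ → ZMod 2) := ((Finset.range s).filter (fun T => pcnt T < q)).image
    (fun T => LinearMap.funLeft (ZMod 2) (ZMod 2) φ (chi T)) with hA
  have hsub : (VV q).map (LinearMap.funLeft (ZMod 2) (ZMod 2) φ) ≤
      Submodule.span (ZMod 2) (A : Set (κ → ZMod 2)) := by
    rw [VV, Submodule.map_span, Submodule.span_le]
    rintro _ ⟨_, ⟨T, hT, rfl⟩, rfl⟩
    by_cases hTs : T < s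
    · apply Submodule.subset_span
      simp only [hA, Finset.coe_image, Set.mem_image, Finset.mem_coe, Finset.mem_filter,
        Finset.mem_range]
      exact ⟨T, ⟨hTs, hT⟩, rfl⟩
    · have : LinearMap.funLeft (ZMod 2) (ZMod 2) φ (chi T) = 0 := by
        funext x
        simp only [LinearMap.funLeft_apply, Pi.zero_apply]
        exact chi_eq_zero (by have := h x; omega)
      rw [this]
      exact Submodule.zero_mem _
  refine (Submodule.finrank_mono hsub).trans ?_
  refine (finrank_span_finset_le_card A).trans ?_
  refine Finset.card_image_le.trans ?_
  rw [cntW, Finset.card_filter]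

theorem chi_top (k T : ℕ) (hT : T < 2 ^ k) : chi (2 ^ k + T) = bitF k * chi T := by
  rw [bitF_mul_chi]
  congr 1
  rw [Nat.lor_comm]
  simpa using Nat.two_pow_add_eq_or_of_lt hT 1

theorem chi_compl (m k : ℕ) (hk : k ≤ m) : ∀ T, T < 2 ^ k →
    ∃ g ∈ VV (pcnt T + 1), ∀ n, n < 2 ^ m → g n = chi T (2 ^ m - (n + 1)) := by
  induction k with
  | zero =>
    intro T hT
    have : T = 0 := by simpa using hT
    subst this
    exact ⟨chi 0, chi_mem (by omega), fun n _ => by simp [chi_zero]⟩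
  | succ k ih =>
    intro T hT
    by_cases h : T < 2 ^ k
    · exact ih (by omega) T h
    · obtain ⟨S, rfl⟩ : ∃ S, T = 2 ^ k + S := ⟨T - 2 ^ k, by omega⟩
      have hS : S < 2 ^ k := by rw [pow_succ] at hT; omega
      obtain ⟨g, hg, hgn⟩ := ih (by omega) S hS
      refine ⟨g + bitF k * g, ?_, ?_⟩
      · rw [pcnt_top k S hS]
        exact Submodule.add_mem _ (VV_mono (Nat.le_succ _) hg) (bitF_mul_mem k _ hg)
      · intro n hn
        rw [chi_top k S hS]
        simp only [Pi.add_apply, Pi.mul_apply, hgn n hn, bitF]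
        rw [Nat.testBit_two_pow_sub_succ hn]
        have : k < m := by omega
        simp only [this]
        cases n.testBit k <;> simp [CharTwo.add_self_eq_zero]

/-- Reflection invariance of the space on `[0,2^m)`. -/
theorem VV_compl (m q : ℕ) {κ : Type} (φ ψ : κ → ℕ) (h : ∀ x, φ x + ψ x + 1 = 2 ^ m) :
    (VV q).map (LinearMap.funLeft (ZMod 2) (ZMod 2) φ) ≤
    (VV q).map (LinearMap.funLeft (ZMod 2) (ZMod 2) ψ) := by
  rw [VV, Submodule.map_span, Submodule.span_le]
  rintro _ ⟨_, ⟨T, hT, rfl⟩, rfl⟩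
  by_cases hTm : T < 2 ^ m
  · obtain ⟨g, hg, hgn⟩ := chi_compl m m le_rfl T hTm
    refine ⟨g, VV_mono (by omega) hg, ?_⟩
    funext x
    have hx := h x
    simp only [LinearMap.funLeft_apply]
    rw [hgn _ (by omega)]
    congr 1
    omega
  · refine ⟨0, Submodule.zero_mem _, ?_⟩
    funext x
    have hx := h x
    simp only [LinearMap.funLeft_apply, Pi.zero_apply]
    rw [chi_eq_zero (by omega)]

theorem bitF_pow_mul_mem (j k q : ℕ) {f : ℕ → ZMod 2} (hf : f ∈ VV q) :
    bitF j ^ k * f ∈ VV (q + k) := by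
  induction k with
  | zero => simpa using hf
  | succ k ih =>
    rw [pow_succ', mul_assoc, ← add_assoc]
    exact bitF_mul_mem j _ ih

theorem prod_bitF_mem {m : ℕ} (d : Fin m → ℕ) (s : Finset (Fin m)) :
    (∏ j ∈ s, bitF j ^ d j) ∈ VV (∑ j ∈ s, d j + 1) := by
  classical
  induction s using Finset.induction_on with
  | empty =>
    simp only [Finset.prod_empty, Finset.sum_empty]
    rw [← chi_zero]
    exact chi_mem (by rw [pcnt_zero]; omega)
  | insert a s ha ih =>
    rw [Finset.prod_insert ha, Finset.sum_insert ha]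
    have := bitF_pow_mul_mem a (d a) _ ih
    rwa [show d a + ∑ j ∈ s, d j + 1 = ∑ j ∈ s, d j + 1 + d a by ring]

theorem chi_poly (m k : ℕ) (hk : k ≤ m) : ∀ T, T < 2 ^ k →
    ∃ f : MvPolynomial (Fin m) (ZMod 2), f.totalDegree ≤ pcnt T ∧
      ∀ n : ℕ, MvPolynomial.eval (fun j : Fin m => if Nat.testBit n j.val then 1 else 0) f
        = chi T n := by
  induction k with
  | zero =>
    intro T hT
    have : T = 0 := by simpa using hT
    subst this
    exact ⟨1, by simp, fun n => by simp [chi_zero]⟩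
  | succ k ih =>
    intro T hT
    by_cases h : T < 2 ^ k
    · exact ih (by omega) T h
    · obtain ⟨S, rfl⟩ : ∃ S, T = 2 ^ k + S := ⟨T - 2 ^ k, by omega⟩
      have hS : S < 2 ^ k := by rw [pow_succ] at hT; omega
      obtain ⟨g, hg, hgn⟩ := ih (by omega) S hS
      refine ⟨MvPolynomial.X ⟨k, by omega⟩ * g, ?_, ?_⟩
      · rw [pcnt_top k S hS]
        refine (MvPolynomial.totalDegree_mul _ _).trans ?_
        rw [MvPolynomial.totalDegree_X]
        omega
      · intro n
        rw [chi_top k S hS, map_mul, hgn]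
        simp [bitF]

theorem RMcode_eq (r m : ℕ) : RMcode r m =
    (VV (r + 1)).map (LinearMap.funLeft (ZMod 2) (ZMod 2) (fun i : Fin (2 ^ m) => i.val)) := by
  apply le_antisymm
  · rw [RMcode, Submodule.span_le]
    rintro _ ⟨f, hf, rfl⟩
    have hsum : (fun i : Fin (2 ^ m) => MvPolynomial.eval
        (fun j : Fin m => if Nat.testBit i.val j.val then (1 : ZMod 2) else 0) f)
        = ∑ d ∈ f.support, f.coeff d • LinearMap.funLeft (ZMod 2) (ZMod 2)
          (fun i : Fin (2 ^ m) => i.val) (∏ j : Fin m, bitF j ^ d j) := by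
      funext i
      rw [MvPolynomial.eval_eq']
      simp [LinearMap.funLeft_apply, bitF]
    rw [hsum]
    apply Submodule.sum_mem
    intro d hd
    apply Submodule.smul_mem
    apply Submodule.mem_map_of_mem
    refine VV_mono ?_ (prod_bitF_mem d Finset.univ)
    have h1 := MvPolynomial.le_totalDegree hd
    rw [Finsupp.sum_fintype _ _ (by simp)] at h1
    omega
  · rw [VV, Submodule.map_span, Submodule.span_le]
    rintro _ ⟨_, ⟨T, hT, rfl⟩, rfl⟩
    by_cases hTm : T < 2 ^ m
    · obtain ⟨f, hf, hfn⟩ := chi_poly m m le_rfl T hTm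
      apply Submodule.subset_span
      refine ⟨f, by omega, ?_⟩
      funext i
      rw [hfn]
      rfl
    · have : LinearMap.funLeft (ZMod 2) (ZMod 2) (fun i : Fin (2 ^ m) => i.val) (chi T) = 0 := by
        funext x
        simp only [LinearMap.funLeft_apply, Pi.zero_apply]
        exact chi_eq_zero (by have := x.2; omega)
      rw [this]
      exact Submodule.zero_mem _

/-- Rank of the restriction of the code to the complement of `J`. -/
theorem shortDim_add (r m : ℕ) (J : Set (Fin (2 ^ m))) :
    finrank (ZMod 2) ((VV (r + 1)).map (LinearMap.funLeft (ZMod 2) (ZMod 2)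
      (fun i : {i // i ∉ J} => i.val.val))) + shortDim (RMcode r m) J
      = finrank (ZMod 2) (RMcode r m) := by
  rw [← finrank_map_add (RMcode r m) (LinearMap.funLeft (ZMod 2) (ZMod 2)
    (fun i : {i // i ∉ J} => i.val))]
  congr 1
  · rw [RMcode_eq, ← Submodule.map_comp]
    rfl
  · rw [shortDim]
    have : supportedOn (ZMod 2) J = LinearMap.ker (LinearMap.funLeft (ZMod 2) (ZMod 2)
      (fun i : {i // i ∉ J} => i.val)) := by
      ext f
      simp only [supportedOn, Submodule.mem_pi, Submodule.mem_bot, LinearMap.mem_ker]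
      constructor
      · intro h
        funext x
        exact h x.1 x.2
      · intro h i hi
        exact congrFun h ⟨i, hi⟩
    rw [this]

theorem finrank_RMcode (r m : ℕ) : finrank (ZMod 2) (RMcode r m) = cntW (r + 1) (2 ^ m) := by
  rw [RMcode_eq]
  apply le_antisymm
  · exact VV_restrict_upper _ _ _ (fun x => x.2)
  · have := VV_restrict_lower m (Fin (2 ^ m)) (r + 1) (fun i => i.val) Fin.val_injective
      (fun x => x.2)
    rwa [Fintype.card_fin] at this

/-- Any shortening has dimension at most that of an initial shortening. -/
theorem shortDim_upper (r m : ℕ) (J : Set (Fin (2 ^ m))) (s : ℕ)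
    (hs : Nat.card {i // i ∉ J} = s) :
    cntW (r + 1) s + shortDim (RMcode r m) J ≤ cntW (r + 1) (2 ^ m) := by
  classical
  rw [← finrank_RMcode, ← shortDim_add r m J]
  have := VV_restrict_lower m {i // i ∉ J} (r + 1) (fun i => i.val.val)
    (Fin.val_injective.comp Subtype.val_injective) (fun x => x.1.2)
  rw [← Nat.card_eq_fintype_card, hs] at this
  omega

theorem shortDim_future (r m i : ℕ) (hi : i < 2 ^ m) :
    cntW (r + 1) (2 ^ m) ≤ cntW (r + 1) (i + 1) +
      shortDim (RMcode r m) {j | (⟨i, hi⟩ : Fin (2 ^ m)) < j} := by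
  rw [← finrank_RMcode, ← shortDim_add r m {j | (⟨i, hi⟩ : Fin (2 ^ m)) < j}]
  apply Nat.add_le_add_right
  apply VV_restrict_upper
  rintro ⟨x, hx⟩
  simp only [Set.mem_ofPred_eq, not_lt, Fin.le_def] at hx ⊢
  omega

theorem shortDim_past (r m i : ℕ) (hi : i < 2 ^ m) :
    cntW (r + 1) (2 ^ m) ≤ cntW (r + 1) (2 ^ m - i) +
      shortDim (RMcode r m) {j | j < (⟨i, hi⟩ : Fin (2 ^ m))} := by
  rw [← finrank_RMcode, ← shortDim_add r m {j | j < (⟨i, hi⟩ : Fin (2 ^ m))}]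
  apply Nat.add_le_add_right
  refine (Submodule.finrank_mono (VV_compl m (r + 1) _
    (fun x : {x // x ∉ {j | j < (⟨i, hi⟩ : Fin (2 ^ m))}} => 2 ^ m - (x.val.val + 1)) ?_)).trans ?_
  · rintro ⟨x, hx⟩
    have := x.2
    simp only
    omega
  · apply VV_restrict_upper
    rintro ⟨x, hx⟩
    have := x.2
    simp only [Set.mem_ofPred_eq, not_lt, Fin.le_def] at hx ⊢
    omega

theorem card_compl_image {N : ℕ} (π : Equiv.Perm (Fin N)) (A : Set (Fin N)) :
    Nat.card {x // x ∉ π '' A} = Nat.card {x // x ∉ A} := by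
  apply Nat.card_congr
  refine (Equiv.subtypeEquiv π ?_).symm
  intro a
  simp

theorem stmt6 (r m : ℕ) (hrm : r ≤ m) :
    trellisWidth (RMcode r m) = tauRM r m := by
  obtain ⟨hA, i₀, hi₀, hB⟩ := G_max m r hrm
  have hdual : ∀ i, i < 2 ^ m → cntW (r + 1) (2 ^ m - i) + i
      = cntW (r + 1) (2 ^ m) + cntW (m - r) i := fun i hi =>
    cntW_dual m (r + 1) (m - r) (by omega) i (2 ^ m - i) (by omega)
  have hlow : ∀ π : Equiv.Perm (Fin (2 ^ m)), tauRM r m ≤ Finset.univ.sup fun i : Fin (2 ^ m) =>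
      finrank (ZMod 2) (RMcode r m) - shortDim (RMcode r m) (⇑π '' {j | j < i})
        - shortDim (RMcode r m) (⇑π '' {j | i < j}) := by
    intro π
    refine le_trans ?_ (Finset.le_sup (Finset.mem_univ (⟨i₀, hi₀⟩ : Fin (2 ^ m))))
    have h1 := shortDim_upper r m (⇑π '' {j | j < (⟨i₀, hi₀⟩ : Fin (2 ^ m))}) (2 ^ m - i₀) (by
      rw [card_compl_image]
      simp [Nat.card_eq_fintype_card, Fintype.card_subtype, Finset.filter_le_eq_Ici])
    have h2 := shortDim_upper r m (⇑π '' {j | (⟨i₀, hi₀⟩ : Fin (2 ^ m)) < j}) (i₀ + 1) (by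
      rw [card_compl_image]
      simp [Nat.card_eq_fintype_card, Fintype.card_subtype, Finset.filter_ge_eq_Iic])
    have h3 := hdual i₀ hi₀
    rw [finrank_RMcode]
    omega
  have hup : (Finset.univ.sup fun i : Fin (2 ^ m) =>
      finrank (ZMod 2) (RMcode r m)
        - shortDim (RMcode r m) (⇑(Equiv.refl (Fin (2 ^ m))) '' {j | j < i})
        - shortDim (RMcode r m) (⇑(Equiv.refl (Fin (2 ^ m))) '' {j | i < j})) ≤ tauRM r m := by
    apply Finset.sup_le
    rintro ⟨i, hi⟩ _
    simp only [Equiv.coe_refl, Set.image_id]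
    have h1 := shortDim_past r m i hi
    have h2 := shortDim_future r m i hi
    have h3 := hdual i hi
    have h4 := hA i hi
    rw [finrank_RMcode]
    omega
  apply le_antisymm
  · refine le_trans (Nat.sInf_le ?_) hup
    exact ⟨Equiv.refl _, rfl⟩
  · apply le_csInf
    · exact ⟨_, Equiv.refl _, rfl⟩
    · rintro t ⟨π, rfl⟩
      exact hlow π
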